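/- arXiv:1307.4002 — 6 statements merged into one kernel-verified Lean document; each statement's English description precedes it below -/
import Mathlib

section
/- There exists a constant C > 0 such that for every ε ∈ (0,1], | ∫_{−1}^{1} dt / (ε + 2(1 − √(1 − t²))) − π/√ε | ≤ C. -/
/-!
For `|t| ≤ 1` the gap `ε + 2 (1 - √(1 - t²))` exceeds the parabola `ε + t²` by exactly
`(1 - √(1 - t²))²`. Since `1 - √(1 - t²)` is at most half the gap and at most `t²`, this excess is
at most half the product of the two widths, so their reciprocals differ by at most `1 / 2`,
uniformly in `ε`. The integral of `1 / (ε + t²)` over the whole line is `π / √ε`, and its two tails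
`|t| > 1` contribute at most `2`.
-/

open Real Set

/-- The width at abscissa `t` of the gap between two unit disks at distance `ε`. It is meaningful
for `|t| ≤ 1` only; beyond that, the square root takes the junk value `0`. -/
noncomputable def gapWidth (ε t : ℝ) : ℝ :=
  ε + 2 * (1 - √(1 - t ^ 2))

section gapWidth

variable {ε t : ℝ}

theorem sqrt_one_sub_sq_le_one : √(1 - t ^ 2) ≤ 1 :=
  sqrt_le_one.2 (sub_le_self 1 (sq_nonneg t))

theorem le_gapWidth : ε ≤ gapWidth ε t :=
  le_add_of_nonneg_right (mul_nonneg zero_le_two (sub_nonneg.2 sqrt_one_sub_sq_le_one))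

theorem gapWidth_pos (hε : 0 < ε) : 0 < gapWidth ε t :=
  hε.trans_le le_gapWidth

theorem gapWidth_sub_add_sq (ht : |t| ≤ 1) :
    gapWidth ε t - (ε + t ^ 2) = (1 - √(1 - t ^ 2)) ^ 2 := by
  have hsq : √(1 - t ^ 2) ^ 2 = 1 - t ^ 2 :=
    sq_sqrt (sub_nonneg.2 ((sq_le_one_iff_abs_le_one t).2 ht))
  unfold gapWidth
  linear_combination -hsq

theorem add_sq_le_gapWidth (ht : |t| ≤ 1) : ε + t ^ 2 ≤ gapWidth ε t :=
  sub_nonneg.1 (gapWidth_sub_add_sq ht ▸ sq_nonneg _)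

theorem one_sub_sqrt_one_sub_sq_le_sq (ht : |t| ≤ 1) : 1 - √(1 - t ^ 2) ≤ t ^ 2 := by
  have ht2 : t ^ 2 ≤ 1 := (sq_le_one_iff_abs_le_one t).2 ht
  have : 1 - t ^ 2 ≤ √(1 - t ^ 2) := le_sqrt_of_sq_le (by nlinarith [sq_nonneg t])
  linarith

theorem inv_gapWidth_le_inv_add_sq (hε : 0 < ε) (ht : |t| ≤ 1) :
    (gapWidth ε t)⁻¹ ≤ (ε + t ^ 2)⁻¹ :=
  inv_anti₀ (by positivity) (add_sq_le_gapWidth ht)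

theorem inv_add_sq_sub_inv_gapWidth_le (hε : 0 < ε) (ht : |t| ≤ 1) :
    (ε + t ^ 2)⁻¹ - (gapWidth ε t)⁻¹ ≤ 1 / 2 := by
  have hgap : 0 < gapWidth ε t := gapWidth_pos hε
  have hpar : 0 < ε + t ^ 2 := by positivity
  have hsqrt : 0 ≤ 1 - √(1 - t ^ 2) := sub_nonneg.2 sqrt_one_sub_sq_le_one
  have hle_par : 1 - √(1 - t ^ 2) ≤ ε + t ^ 2 :=
    (one_sub_sqrt_one_sub_sq_le_sq ht).trans (le_add_of_nonneg_left hε.le)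
  have hle_gap : 1 - √(1 - t ^ 2) ≤ gapWidth ε t / 2 := by
    unfold gapWidth
    linarith
  rw [inv_sub_inv hpar.ne' hgap.ne', gapWidth_sub_add_sq ht, div_le_iff₀ (by positivity)]
  calc (1 - √(1 - t ^ 2)) ^ 2 = (1 - √(1 - t ^ 2)) * (1 - √(1 - t ^ 2)) := sq _
    _ ≤ (ε + t ^ 2) * (gapWidth ε t / 2) := by gcongr
    _ = 1 / 2 * ((ε + t ^ 2) * gapWidth ε t) := by ring

end gapWidth

section Integrals

variable {a ε L : ℝ}

theorem arctan_le_self_of_nonneg {x : ℝ} (hx : 0 ≤ x) : arctan x ≤ x := by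
  simpa only [tan_arctan] using le_tan (arctan_nonneg.2 hx) (arctan_lt_pi_div_two x)

theorem integral_neg_self_inv_sq_add_sq (ha : 0 < a) (hL : 0 < L) :
    ∫ t in -L..L, (a ^ 2 + t ^ 2)⁻¹ = π / a - 2 / a * arctan (a / L) := by
  have hinv : arctan (L / a) = π / 2 - arctan (a / L) := by
    rw [← inv_div, arctan_inv_of_pos (by positivity)]
  rw [integral_inv_sq_add_sq ha.ne', neg_div, arctan_neg, hinv]
  ring

theorem integral_neg_self_inv_sq_add_sq_mem_Icc (ha : 0 < a) (hL : 0 < L) :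
    ∫ t in -L..L, (a ^ 2 + t ^ 2)⁻¹ ∈ Icc (π / a - 2 / L) (π / a) := by
  have htail_nonneg : 0 ≤ 2 / a * arctan (a / L) :=
    mul_nonneg (by positivity) (arctan_nonneg.2 (by positivity))
  have htail_le : 2 / a * arctan (a / L) ≤ 2 / L :=
    calc 2 / a * arctan (a / L) ≤ 2 / a * (a / L) := by
          gcongr
          exact arctan_le_self_of_nonneg (by positivity)
      _ = 2 / L := by field_simp
  rw [integral_neg_self_inv_sq_add_sq ha hL]
  constructor <;> linarith

theorem continuous_inv_gapWidth (hε : 0 < ε) : Continuous fun t ↦ (gapWidth ε t)⁻¹ :=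
  Continuous.inv₀ (by unfold gapWidth; fun_prop) fun _ ↦ (gapWidth_pos hε).ne'

theorem continuous_inv_add_sq (hε : 0 < ε) : Continuous fun t : ℝ ↦ (ε + t ^ 2)⁻¹ :=
  Continuous.inv₀ (by fun_prop) fun _ ↦ by positivity

theorem integral_inv_gapWidth_le (hε : 0 < ε) :
    ∫ t in (-1)..1, (gapWidth ε t)⁻¹ ≤ ∫ t in (-1)..1, (ε + t ^ 2)⁻¹ :=
  intervalIntegral.integral_mono_on (by norm_num)
    ((continuous_inv_gapWidth hε).intervalIntegrable _ _)
    ((continuous_inv_add_sq hε).intervalIntegrable _ _)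
    fun _ ht ↦ inv_gapWidth_le_inv_add_sq hε (abs_le.2 ht)

theorem integral_inv_add_sq_sub_integral_inv_gapWidth_le (hε : 0 < ε) :
    (∫ t in (-1)..1, (ε + t ^ 2)⁻¹) - ∫ t in (-1)..1, (gapWidth ε t)⁻¹ ≤ 1 := by
  have hgap := (continuous_inv_gapWidth hε).intervalIntegrable (μ := MeasureTheory.volume) (-1) 1
  have hpar := (continuous_inv_add_sq hε).intervalIntegrable (μ := MeasureTheory.volume) (-1) 1
  calc (∫ t in (-1)..1, (ε + t ^ 2)⁻¹) - ∫ t in (-1)..1, (gapWidth ε t)⁻¹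
      = ∫ t in (-1)..1, ((ε + t ^ 2)⁻¹ - (gapWidth ε t)⁻¹) :=
        (intervalIntegral.integral_sub hpar hgap).symm
    _ ≤ ∫ _ in (-1 : ℝ)..1, (1 / 2 : ℝ) :=
        intervalIntegral.integral_mono_on (by norm_num) (hpar.sub hgap)
          intervalIntegrable_const fun _ ht ↦ inv_add_sq_sub_inv_gapWidth_le hε (abs_le.2 ht)
    _ = 1 := by norm_num

end Integrals

theorem gap_integral_estimate_general {ε : ℝ} (hε : 0 < ε) :
    ∫ t in (-1 : ℝ)..1, 1 / (ε + 2 * (1 - √(1 - t ^ 2))) ∈ Icc (π / √ε - 3) (π / √ε) := by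
  have hpar := integral_neg_self_inv_sq_add_sq_mem_Icc (sqrt_pos.2 hε) one_pos
  rw [sq_sqrt hε.le, div_one] at hpar
  have hupper := integral_inv_gapWidth_le hε
  have hlower := integral_inv_add_sq_sub_integral_inv_gapWidth_le hε
  simp only [gapWidth] at hupper hlower
  simp only [one_div]
  exact ⟨by linarith [hpar.1], hupper.trans hpar.2⟩

/-- There is a constant `C > 0` such that for every `ε ∈ (0,1]`,
`| ∫_{−1}^{1} dt / (ε + 2(1 − √(1 − t²))) − π/√ε | ≤ C`. -/
theorem gap_integral_estimate :
    ∃ C > (0 : ℝ), ∀ ε ∈ Set.Ioc (0 : ℝ) 1,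
      |(∫ t in (-1 : ℝ)..1, 1 / (ε + 2 * (1 - Real.sqrt (1 - t ^ 2))))
        - Real.pi / Real.sqrt ε| ≤ C := by
  refine ⟨3, three_pos, fun ε hε ↦ abs_le.2 ?_⟩
  obtain ⟨hlower, hupper⟩ := gap_integral_estimate_general hε.1
  constructor <;> linarith
end

section
/- For every real λ > 0, ∫_{−∞}^{∞} λ / (e^{λ(1+y²)} − 1) dy = √(πλ) · Σ_{n=1}^{∞} e^{−λn}/√n, where the series on the right converges (it equals √(πλ) Li_{1/2}(e^{−λ}), the polylogarithm of order 1/2 evaluated at e^{−λ}). -/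
/-!
Expand `f / (1 - f)` as the geometric series `∑ fⁿ⁺¹` and integrate term by term. For
`f y = e^{-λ(1 + y²)}` the left side is `1 / (e^{λ(1 + y²)} - 1)`, and every power of `f` is again
a Gaussian, of integral `√(π / (λ(n + 1))) e^{-λ(n + 1)}`. The interchange is legitimate
because `|f| ≤ e^{-λ} < 1` gives `∫ |f|ⁿ⁺¹ ≤ e^{-λn} ∫ |f|`, which is summable.
-/

open MeasureTheory Real

section GeometricSeries

variable {α 𝕜 : Type*} [MeasurableSpace α] {μ : Measure α} [NormedDivisionRing 𝕜]
  {f : α → 𝕜} {r : ℝ}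

lemma norm_pow_succ_le_of_norm_le {a : 𝕜} (ha : ‖a‖ ≤ r) (n : ℕ) :
    ‖a ^ (n + 1)‖ ≤ r ^ n * ‖a‖ := by
  rw [norm_pow, pow_succ]
  gcongr

lemma integrable_pow_succ_of_norm_le (hf : Integrable f μ) (hfr : ∀ᵐ x ∂μ, ‖f x‖ ≤ r) (n : ℕ) :
    Integrable (fun x ↦ f x ^ (n + 1)) μ :=
  (hf.norm.const_mul (r ^ n)).mono' (hf.aestronglyMeasurable.pow (n + 1)) <|
    hfr.mono fun _ hx ↦ norm_pow_succ_le_of_norm_le hx n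

lemma integral_norm_pow_succ_le (hf : Integrable f μ) (hfr : ∀ᵐ x ∂μ, ‖f x‖ ≤ r) (n : ℕ) :
    ∫ x, ‖f x ^ (n + 1)‖ ∂μ ≤ r ^ n * ∫ x, ‖f x‖ ∂μ := by
  rw [← integral_const_mul]
  exact integral_mono_ae (integrable_pow_succ_of_norm_le hf hfr n).norm (hf.norm.const_mul _)
    (hfr.mono fun _ hx ↦ norm_pow_succ_le_of_norm_le hx n)

lemma hasSum_pow_succ_of_norm_lt_one {a : 𝕜} (ha : ‖a‖ < 1) :
    HasSum (fun n : ℕ ↦ a ^ (n + 1)) (a / (1 - a)) := by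
  simpa only [pow_succ', div_eq_mul_inv] using (hasSum_geometric_of_norm_lt_one ha).mul_left a

theorem hasSum_integral_pow_succ [NormedSpace ℝ 𝕜] (hf : Integrable f μ) (hr : r < 1)
    (hfr : ∀ᵐ x ∂μ, ‖f x‖ ≤ r) :
    HasSum (fun n : ℕ ↦ ∫ x, f x ^ (n + 1) ∂μ) (∫ x, f x / (1 - f x) ∂μ) := by
  rcases eq_or_ne μ 0 with rfl | hμ
  · simp
  have : NeZero μ := ⟨hμ⟩
  have hr₀ : 0 ≤ r := let ⟨_, hx⟩ := hfr.exists; (norm_nonneg _).trans hx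
  have hsummable : Summable fun n : ℕ ↦ ∫ x, ‖f x ^ (n + 1)‖ ∂μ :=
    ((summable_geometric_of_lt_one hr₀ hr).mul_right _).of_nonneg_of_le
      (fun _ ↦ integral_nonneg fun _ ↦ norm_nonneg _) (integral_norm_pow_succ_le hf hfr)
  have htsum : ∀ᵐ x ∂μ, ∑' n : ℕ, f x ^ (n + 1) = f x / (1 - f x) :=
    hfr.mono fun _ hx ↦ (hasSum_pow_succ_of_norm_lt_one (hx.trans_lt hr)).tsum_eq
  rw [← integral_congr_ae htsum]
  exact hasSum_integral_of_summable_integral_norm (integrable_pow_succ_of_norm_le hf hfr) hsummable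

end GeometricSeries

theorem hasSum_integral_gaussian_smul_div_one_sub {𝕜 : Type*} [NormedDivisionRing 𝕜]
    [NormedAlgebra ℝ 𝕜] [CompleteSpace 𝕜] {b : ℝ} (hb : 0 < b) {z : 𝕜} (hz : ‖z‖ < 1) :
    HasSum (fun n : ℕ ↦ √(π / (b * (n + 1))) • z ^ (n + 1))
      (∫ y : ℝ, exp (-b * y ^ 2) • z / (1 - exp (-b * y ^ 2) • z)) := by
  have hnorm (y : ℝ) : ‖exp (-b * y ^ 2) • z‖ ≤ ‖z‖ := by
    rw [norm_smul, norm_of_nonneg (exp_nonneg _)]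
    refine mul_le_of_le_one_left (norm_nonneg z) (exp_le_one_iff.mpr ?_)
    exact mul_nonpos_of_nonpos_of_nonneg (neg_nonpos.mpr hb.le) (sq_nonneg y)
  have hpow (n : ℕ) (y : ℝ) :
      (exp (-b * y ^ 2) • z) ^ (n + 1) = exp (-(b * (n + 1)) * y ^ 2) • z ^ (n + 1) := by
    rw [smul_pow, ← exp_nat_mul]
    push_cast
    ring_nf
  have hintegral (n : ℕ) :
      ∫ y : ℝ, (exp (-b * y ^ 2) • z) ^ (n + 1) = √(π / (b * (n + 1))) • z ^ (n + 1) := by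
    simp only [hpow]
    rw [integral_smul_const, integral_gaussian]
  simpa only [hintegral] using hasSum_integral_pow_succ
    ((integrable_exp_neg_mul_sq hb).smul_const z) hz (ae_of_all _ hnorm)

lemma exp_neg_div_one_sub_exp_neg (t : ℝ) : exp (-t) / (1 - exp (-t)) = 1 / (exp t - 1) := by
  rw [← mul_div_mul_left _ _ (exp_ne_zero t), mul_sub, ← exp_add, add_neg_cancel, exp_zero, mul_one]

theorem hasSum_integral_one_div_exp_add_mul_sq_sub_one {a b : ℝ} (ha : 0 < a) (hb : 0 < b) :
    HasSum (fun n : ℕ ↦ √(π / b) * (exp (-a * (n + 1)) / √(n + 1)))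
      (∫ y : ℝ, 1 / (exp (a + b * y ^ 2) - 1)) := by
  have hz : ‖exp (-a)‖ < 1 := by
    rwa [norm_of_nonneg (exp_nonneg _), exp_lt_one_iff, neg_lt_zero]
  have hterm (n : ℕ) : √(π / (b * (n + 1))) • exp (-a) ^ (n + 1) =
      √(π / b) * (exp (-a * (n + 1)) / √(n + 1)) := by
    rw [smul_eq_mul, ← div_div, sqrt_div (by positivity), ← exp_nat_mul]
    push_cast
    ring_nf
  have hintegrand (y : ℝ) : exp (-b * y ^ 2) • exp (-a) / (1 - exp (-b * y ^ 2) • exp (-a)) =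
      1 / (exp (a + b * y ^ 2) - 1) := by
    rw [smul_eq_mul, ← exp_add, ← exp_neg_div_one_sub_exp_neg]
    ring_nf
  simpa only [hterm, hintegrand] using hasSum_integral_gaussian_smul_div_one_sub hb hz

lemma mul_sqrt_div_self {c x : ℝ} (hx : 0 ≤ x) : x * √(c / x) = √(c * x) := by
  rw [sqrt_div' _ hx, sqrt_mul' _ hx, mul_div_left_comm, div_sqrt]

/-- For every `λ > 0`,
`∫_{−∞}^{∞} λ/(e^{λ(1+y²)} − 1) dy = √(πλ) · ∑_{n=1}^{∞} e^{−λn}/√n`,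
where the series on the right converges (it equals `√(πλ) Li_{1/2}(e^{−λ})`). -/
theorem integral_eq_sqrt_pi_lambda_mul_polylog (lam : ℝ) (hlam : 0 < lam) :
    Summable (fun n : ℕ => Real.exp (-lam * (n + 1)) / Real.sqrt (n + 1)) ∧
    ∫ y : ℝ, lam / (Real.exp (lam * (1 + y ^ 2)) - 1)
      = Real.sqrt (Real.pi * lam)
        * ∑' n : ℕ, Real.exp (-lam * (n + 1)) / Real.sqrt (n + 1) := by
  have hsum : HasSum (fun n : ℕ ↦ √(π * lam) * (exp (-lam * (n + 1)) / √(n + 1)))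
      (∫ y : ℝ, lam / (exp (lam * (1 + y ^ 2)) - 1)) := by
    simpa only [← mul_assoc, mul_sqrt_div_self hlam.le, ← integral_const_mul, mul_one_div,
      mul_one_add] using (hasSum_integral_one_div_exp_add_mul_sq_sub_one hlam hlam).mul_left lam
  have hsqrt : √(π * lam) ≠ 0 := by positivity
  exact ⟨(summable_mul_left_iff hsqrt).mp hsum.summable, by rw [← hsum.tsum_eq, tsum_mul_left]⟩
end

section
/- For every p ∈ (0,1), 0 < p(1 − p² + (1 + p²) ln p) / ((1 − p²)² ln p) ≤ 1/6. -/
/-!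
Substituting `p = exp t` turns the coefficient into the even function
`(t cosh t - sinh t) / (2 t sinh² t)` of `t ≠ 0`, which makes it invariant under `p ↦ p⁻¹`. The
bounds then say that the odd functions `t cosh t - sinh t` and
`t sinh² t - 3 (t cosh t - sinh t)` have the sign of `t`, and both are strictly increasing: for
`t > 0` their derivatives are `t sinh t` and `sinh t ((sinh t - t) + 2 t (cosh t - 1))`.
-/

open Real Set

theorem strictMono_of_odd_of_deriv_pos {f : ℝ → ℝ} (hodd : Function.Odd f)
    (hcont : ContinuousOn f (Ici 0)) (hderiv : ∀ x, 0 < x → 0 < deriv f x) : StrictMono f :=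
  strictMono_of_odd_strictMonoOn_nonneg hodd <|
    strictMonoOn_of_deriv_pos (convex_Ici 0) hcont (by simpa using hderiv)

theorem hasDerivAt_mul_cosh_sub_sinh (x : ℝ) :
    HasDerivAt (fun x ↦ x * cosh x - sinh x) (x * sinh x) x :=
  (((hasDerivAt_id x).mul (hasDerivAt_cosh x)).sub (hasDerivAt_sinh x)).congr_deriv (by simp)

theorem strictMono_mul_cosh_sub_sinh : StrictMono fun x : ℝ ↦ x * cosh x - sinh x := by
  refine strictMono_of_odd_of_deriv_pos (fun x ↦ ?_) (by fun_prop) fun x hx ↦ ?_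
  · rw [cosh_neg, sinh_neg]
    ring
  · rw [(hasDerivAt_mul_cosh_sub_sinh x).deriv]
    exact mul_pos hx (sinh_pos_iff.2 hx)

theorem sinh_lt_mul_cosh_iff {t : ℝ} : sinh t < t * cosh t ↔ 0 < t := by
  simpa using strictMono_mul_cosh_sub_sinh.lt_iff_lt (a := 0) (b := t)

theorem hasDerivAt_mul_sinh_sq_sub (x : ℝ) :
    HasDerivAt (fun x ↦ x * sinh x ^ 2 - 3 * (x * cosh x - sinh x))
      (sinh x * ((sinh x - x) + 2 * x * (cosh x - 1))) x :=
  (((hasDerivAt_id x).mul ((hasDerivAt_sinh x).pow 2)).sub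
    ((hasDerivAt_mul_cosh_sub_sinh x).const_mul 3)).congr_deriv (by
      simp only [Pi.pow_apply, id_eq, Nat.cast_ofNat]
      ring)

theorem strictMono_mul_sinh_sq_sub :
    StrictMono fun x : ℝ ↦ x * sinh x ^ 2 - 3 * (x * cosh x - sinh x) := by
  refine strictMono_of_odd_of_deriv_pos (fun x ↦ ?_) (by fun_prop) fun x hx ↦ ?_
  · rw [cosh_neg, sinh_neg]
    ring
  · rw [(hasDerivAt_mul_sinh_sq_sub x).deriv]
    have hsinh : 0 < sinh x - x := sub_pos.2 (self_lt_sinh_iff.2 hx)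
    have hcosh : 0 ≤ cosh x - 1 := sub_nonneg.2 (one_le_cosh x)
    have : 0 < sinh x := sinh_pos_iff.2 hx
    positivity

theorem three_mul_mul_cosh_sub_sinh_lt_iff {t : ℝ} :
    3 * (t * cosh t - sinh t) < t * sinh t ^ 2 ↔ 0 < t := by
  simpa using strictMono_mul_sinh_sq_sub.lt_iff_lt (a := 0) (b := t)

theorem mul_cosh_sub_sinh_div_mem_Ioo {t : ℝ} (ht : t ≠ 0) :
    (t * cosh t - sinh t) / (t * sinh t ^ 2) ∈ Ioo 0 (1 / 3) := by
  wlog hpos : 0 < t generalizing t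
  · have hneg : 0 < -t := neg_pos.2 (ht.lt_of_le (not_lt.1 hpos))
    have heven : (-t * cosh (-t) - sinh (-t)) / (-t * sinh (-t) ^ 2) =
        (t * cosh t - sinh t) / (t * sinh t ^ 2) := by
      rw [cosh_neg, sinh_neg, neg_sq, neg_mul, neg_mul, neg_sub_neg, ← neg_sub, neg_div_neg_eq]
    exact heven ▸ this hneg.ne' hneg
  have hden : 0 < t * sinh t ^ 2 := mul_pos hpos (pow_pos (sinh_pos_iff.2 hpos) 2)
  refine ⟨div_pos (sub_pos.2 (sinh_lt_mul_cosh_iff.2 hpos)) hden, ?_⟩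
  rw [div_lt_iff₀ hden]
  linarith [three_mul_mul_cosh_sub_sinh_lt_iff.2 hpos]

theorem one_sub_exp_sq (t : ℝ) : 1 - exp t ^ 2 = -(2 * exp t * sinh t) := by
  rw [sinh_eq, exp_neg]
  field_simp
  ring

theorem one_add_exp_sq (t : ℝ) : 1 + exp t ^ 2 = 2 * exp t * cosh t := by
  rw [cosh_eq, exp_neg]
  field_simp
  ring

theorem coefficient_exp_eq_hyperbolic (t : ℝ) :
    exp t * (1 - exp t ^ 2 + (1 + exp t ^ 2) * t) / ((1 - exp t ^ 2) ^ 2 * t) =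
      (t * cosh t - sinh t) / (t * sinh t ^ 2) / 2 := by
  rw [one_sub_exp_sq, one_add_exp_sq, div_div]
  calc
    _ = 2 * exp t ^ 2 * (t * cosh t - sinh t) / (2 * exp t ^ 2 * (t * sinh t ^ 2 * 2)) := by
      ring_nf
    _ = _ := mul_div_mul_left _ _ (by positivity)

theorem coefficient_bound_one_sixth_general {p : ℝ} (hp : 0 < p) (hp1 : p ≠ 1) :
    0 < p * (1 - p ^ 2 + (1 + p ^ 2) * log p) / ((1 - p ^ 2) ^ 2 * log p) ∧
    p * (1 - p ^ 2 + (1 + p ^ 2) * log p) / ((1 - p ^ 2) ^ 2 * log p) < 1 / 6 := by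
  obtain ⟨hlower, hupper⟩ := mul_cosh_sub_sinh_div_mem_Ioo (log_ne_zero_of_pos_of_ne_one hp hp1)
  have hcoeff := coefficient_exp_eq_hyperbolic (log p)
  rw [exp_log hp] at hcoeff
  rw [hcoeff]
  exact ⟨by linarith, by linarith⟩

/-- For every `p ∈ (0,1)`,
`0 < p(1 − p² + (1 + p²) ln p) / ((1 − p²)² ln p) ≤ 1/6`. -/
theorem coefficient_bound_one_sixth (p : ℝ) (hp : p ∈ Set.Ioo (0 : ℝ) 1) :
    0 < p * (1 - p ^ 2 + (1 + p ^ 2) * Real.log p) / ((1 - p ^ 2) ^ 2 * Real.log p) ∧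
    p * (1 - p ^ 2 + (1 + p ^ 2) * Real.log p) / ((1 - p ^ 2) ^ 2 * Real.log p) ≤ 1 / 6 :=
  (coefficient_bound_one_sixth_general hp.1 hp.2.ne).imp_right le_of_lt
end

section
/- For every p ∈ (0,1), −1 < (1 − p² + 2p ln p) / ((1 − p²) ln p) < 0; in particular its absolute value is at most 1. (Equivalently, 1 − p² + 2p ln p > 0 and (1 − p² + 2p ln p) < −(1 − p²) ln p · 1 for p ∈ (0,1).) -/
/-! With `t = -log p > 0` one has `1 - p ^ 2 = 2 * p * sinh t`, so the numerator is
`2 * p * (sinh t - t)`, the denominator is `-(2 * p * (t * sinh t))`, and the quotient equals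
`1 / sinh t - 1 / t`. It is negative because `t < sinh t`. It exceeds `-1` because
`sinh t < t * cosh t` and `cosh t ≤ 1 + sinh t` give `sinh t - t < t * sinh t`. -/

open Real

theorem sinh_lt_self_mul_cosh {t : ℝ} (ht : 0 < t) : sinh t < t * cosh t := by
  obtain ⟨c, ⟨hc0, hct⟩, hc⟩ : ∃ c ∈ Set.Ioo 0 t, cosh c = (sinh t - sinh 0) / (t - 0) :=
    exists_hasDerivAt_eq_slope sinh cosh ht continuous_sinh.continuousOn
      fun x _ ↦ hasDerivAt_sinh x
  have hslope : sinh t / t < cosh t := by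
    calc sinh t / t = cosh c := by simp [hc]
      _ < cosh t := cosh_strictMonoOn hc0.le ht.le hct
  exact (div_lt_iff₀' ht).1 hslope

theorem cosh_le_one_add_sinh {t : ℝ} (ht : 0 ≤ t) : cosh t ≤ 1 + sinh t := by
  rw [← sub_le_iff_le_add, cosh_sub_sinh]
  exact exp_le_one_iff.2 (neg_nonpos.2 ht)

theorem sinh_sub_self_lt_self_mul_sinh {t : ℝ} (ht : t ≠ 0) : sinh t - t < t * sinh t := by
  rcases lt_or_gt_of_ne ht with hneg | hpos
  · calc sinh t - t < 0 := sub_neg.2 (sinh_lt_self_iff.2 hneg)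
      _ < t * sinh t := mul_pos_of_neg_of_neg hneg (sinh_neg_iff.2 hneg)
  · calc sinh t - t < t * cosh t - t := sub_lt_sub_right (sinh_lt_self_mul_cosh hpos) t
      _ ≤ t * (1 + sinh t) - t := by gcongr; exact cosh_le_one_add_sinh hpos.le
      _ = t * sinh t := by ring

theorem one_sub_sq_eq_two_mul_mul_sinh_neg_log {p : ℝ} (hp : 0 < p) :
    1 - p ^ 2 = 2 * p * sinh (-log p) := by
  rw [sinh_neg, sinh_log hp]
  field_simp
  ring

theorem one_sub_sq_add_two_mul_mul_log_eq {p : ℝ} (hp : 0 < p) :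
    1 - p ^ 2 + 2 * p * log p = 2 * p * (sinh (-log p) - -log p) := by
  rw [one_sub_sq_eq_two_mul_mul_sinh_neg_log hp]
  ring

theorem one_sub_sq_add_two_mul_mul_log_pos {p : ℝ} (hp0 : 0 < p) (hp1 : p < 1) :
    0 < 1 - p ^ 2 + 2 * p * log p := by
  have ht : 0 < -log p := neg_pos.2 (log_neg hp0 hp1)
  rw [one_sub_sq_add_two_mul_mul_log_eq hp0]
  exact mul_pos (by positivity) (sub_pos.2 (self_lt_sinh_iff.2 ht))

theorem one_sub_sq_add_two_mul_mul_log_lt {p : ℝ} (hp0 : 0 < p) (hp1 : p ≠ 1) :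
    1 - p ^ 2 + 2 * p * log p < -((1 - p ^ 2) * log p) := by
  have ht : -log p ≠ 0 := neg_ne_zero.2 (log_ne_zero_of_pos_of_ne_one hp0 hp1)
  calc 1 - p ^ 2 + 2 * p * log p = 2 * p * (sinh (-log p) - -log p) :=
        one_sub_sq_add_two_mul_mul_log_eq hp0
    _ < 2 * p * (-log p * sinh (-log p)) := by
        gcongr; exact sinh_sub_self_lt_self_mul_sinh ht
    _ = -((1 - p ^ 2) * log p) := by
        rw [one_sub_sq_eq_two_mul_mul_sinh_neg_log hp0]; ring

/-- For every `p ∈ (0,1)`,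
`−1 < (1 − p² + 2p ln p) / ((1 − p²) ln p) < 0`; in particular its absolute value is at
most `1` (equivalently `1 − p² + 2p ln p > 0` and `1 − p² + 2p ln p < −(1 − p²) ln p`). -/
theorem coefficient_bound_neg_one_zero (p : ℝ) (hp : p ∈ Set.Ioo (0 : ℝ) 1) :
    (-1 < (1 - p ^ 2 + 2 * p * Real.log p) / ((1 - p ^ 2) * Real.log p) ∧
      (1 - p ^ 2 + 2 * p * Real.log p) / ((1 - p ^ 2) * Real.log p) < 0) ∧
    |(1 - p ^ 2 + 2 * p * Real.log p) / ((1 - p ^ 2) * Real.log p)| ≤ 1 ∧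
    0 < 1 - p ^ 2 + 2 * p * Real.log p ∧
    1 - p ^ 2 + 2 * p * Real.log p < -((1 - p ^ 2) * Real.log p) := by
  have hnum := one_sub_sq_add_two_mul_mul_log_pos hp.1 hp.2
  have hlt := one_sub_sq_add_two_mul_mul_log_lt hp.1 hp.2.ne
  have hden : (1 - p ^ 2) * log p < 0 := neg_pos.1 (hnum.trans hlt)
  have hlower : -1 < (1 - p ^ 2 + 2 * p * log p) / ((1 - p ^ 2) * log p) := by
    rwa [lt_div_iff_of_neg hden, neg_one_mul]
  have hupper := div_neg_of_pos_of_neg hnum hden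
  exact ⟨⟨hlower, hupper⟩, abs_le.2 ⟨hlower.le, hupper.le.trans zero_le_one⟩, hnum, hlt⟩
end

section
/- For every p ∈ (0,1), −2/3 ≤ (1 − p⁴ + 4p² ln p) / ((1 − p²)² ln p) < 0, and the expression tends to −2/3 as p → 1⁻. -/
/-!
Put `u = log p`. The expression becomes `(u - sinh u * cosh u) / (u * sinh u ^ 2)`, an even
function of `u`, and the power series of `x * sinh x` and `x ^ 2 * cosh x` at `x = 2 * u` enclose it
between `-2 / 3` and `-2 / 3 * (u / sinh u) ^ 2`. The upper bound is negative and tends to `-2 / 3`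
as `u → 0`, so the enclosure gives both the inequalities and the limit.
-/

open Filter Topology
open Real (cosh sinh)

lemma hasSum_mul_sinh (x : ℝ) :
    HasSum (fun n : ℕ => x ^ (2 * n + 2) / (2 * n + 1).factorial) (x * sinh x) :=
  ((Real.hasSum_sinh x).mul_left x).congr_fun fun n => by ring

lemma sq_add_pow_four_div_six_le_mul_sinh (x : ℝ) : x ^ 2 + x ^ 4 / 6 ≤ x * sinh x := by
  have h := sum_le_hasSum (Finset.range 2)
    (fun n _ => div_nonneg (Even.pow_nonneg (by grind) x) (Nat.cast_nonneg _)) (hasSum_mul_sinh x)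
  norm_num [Finset.sum_range_succ, Nat.factorial] at h
  exact h

lemma hasSum_sq_mul_cosh_sub_three_mul_mul_sinh (x : ℝ) :
    HasSum (fun n : ℕ => x ^ (2 * n + 2) * (2 * n - 2) / (2 * n + 1).factorial)
      (x ^ 2 * cosh x - 3 * (x * sinh x)) := by
  refine (((Real.hasSum_cosh x).mul_left (x ^ 2)).sub
    ((hasSum_mul_sinh x).mul_left 3)).congr_fun fun n => ?_
  rw [Nat.factorial_succ]
  push_cast
  field_simp
  ring

/-- A quantitative form of the hyperbolic Cusa–Huygens inequality `3 sinh x / x < 2 + cosh x`. -/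
lemma three_mul_mul_sinh_add_pow_six_div_sixty_le (x : ℝ) :
    3 * (x * sinh x) + x ^ 6 / 60 ≤ x ^ 2 * (2 + cosh x) := by
  -- The terms of index `0`, `1`, `2` are `-2 * x ^ 2`, `0` and `x ^ 6 / 60`.
  have hnonneg : ∀ n ∉ Finset.range 3,
      0 ≤ x ^ (2 * n + 2) * (2 * n - 2 : ℝ) / (2 * n + 1).factorial := fun n hn => by
    have hn : (3 : ℝ) ≤ n := by exact_mod_cast not_lt.1 (mt Finset.mem_range.2 hn)
    exact div_nonneg (mul_nonneg (Even.pow_nonneg (by grind) x) (by linarith)) (Nat.cast_nonneg _)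
  have h := sum_le_hasSum _ hnonneg (hasSum_sq_mul_cosh_sub_three_mul_mul_sinh x)
  norm_num [Finset.sum_range_succ, Nat.factorial] at h
  linarith

/-- The coefficient function of `coefficient_bound_two_thirds` in the variable `u = log p`. For
`u ≠ 0` it equals `-(u * coth u)' / u`; at `u = 0` division by zero gives the value `0`. -/
noncomputable def hyperbolicCoefficient (u : ℝ) : ℝ :=
  (u - sinh u * cosh u) / (u * sinh u ^ 2)

lemma hyperbolicCoefficient_log {p : ℝ} (hp : 0 < p) :
    hyperbolicCoefficient (Real.log p) =
      (1 - p ^ 4 + 4 * p ^ 2 * Real.log p) / ((1 - p ^ 2) ^ 2 * Real.log p) := by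
  have hnum : Real.log p - (p - p⁻¹) / 2 * ((p + p⁻¹) / 2) =
      (1 - p ^ 4 + 4 * p ^ 2 * Real.log p) / (4 * p ^ 2) := by
    field_simp
    ring
  have hden : Real.log p * ((p - p⁻¹) / 2) ^ 2 =
      (1 - p ^ 2) ^ 2 * Real.log p / (4 * p ^ 2) := by
    field_simp
    ring
  rw [hyperbolicCoefficient, Real.sinh_log hp, Real.cosh_log hp, hnum, hden,
    div_div_div_cancel_right₀ (by positivity)]

lemma hyperbolicCoefficient_eq_div_sq {u : ℝ} (hu : u ≠ 0) :
    hyperbolicCoefficient u = (u ^ 2 - u * sinh u * cosh u) / (u * sinh u) ^ 2 := by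
  rw [hyperbolicCoefficient, ← mul_div_mul_left (u - sinh u * cosh u) _ hu]
  ring_nf

lemma mul_sinh_sq_pos {u : ℝ} (hu : u ≠ 0) : 0 < (u * sinh u) ^ 2 :=
  sq_pos_of_ne_zero (mul_ne_zero hu (Real.sinh_ne_zero.2 hu))

lemma neg_two_thirds_lt_hyperbolicCoefficient {u : ℝ} (hu : u ≠ 0) :
    -2 / 3 < hyperbolicCoefficient u := by
  have hcusa := three_mul_mul_sinh_add_pow_six_div_sixty_le (2 * u)
  rw [Real.sinh_two_mul, Real.cosh_two_mul, Real.cosh_sq] at hcusa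
  have hu6 : 0 < u ^ 6 := by positivity
  rw [hyperbolicCoefficient_eq_div_sq hu, lt_div_iff₀ (mul_sinh_sq_pos hu)]
  linarith

lemma hyperbolicCoefficient_le {u : ℝ} (hu : u ≠ 0) :
    hyperbolicCoefficient u ≤ -2 / 3 * (u / sinh u) ^ 2 := by
  have hsinh : sinh u ≠ 0 := Real.sinh_ne_zero.2 hu
  have htaylor := sq_add_pow_four_div_six_le_mul_sinh (2 * u)
  rw [Real.sinh_two_mul] at htaylor
  have hcancel : -2 / 3 * (u / sinh u) ^ 2 * (u * sinh u) ^ 2 = -2 / 3 * u ^ 4 := by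
    field_simp
  rw [hyperbolicCoefficient_eq_div_sq hu, div_le_iff₀ (mul_sinh_sq_pos hu), hcancel]
  linarith

lemma hyperbolicCoefficient_neg {u : ℝ} (hu : u ≠ 0) : hyperbolicCoefficient u < 0 := by
  have hsq : 0 < (u / sinh u) ^ 2 := sq_pos_of_ne_zero (div_ne_zero hu (Real.sinh_ne_zero.2 hu))
  linarith [hyperbolicCoefficient_le hu]

lemma tendsto_div_sinh_nhdsNE_zero : Tendsto (fun u => u / sinh u) (𝓝[≠] 0) (𝓝 1) :=
  (Asymptotics.isEquivalent_iff_tendsto_one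
    (eventually_mem_nhdsWithin.mono fun _ hu => Real.sinh_ne_zero.2 hu)).1
    (Real.isEquivalent_sinh.symm.mono nhdsWithin_le_nhds)

lemma tendsto_hyperbolicCoefficient_nhdsNE_zero :
    Tendsto hyperbolicCoefficient (𝓝[≠] 0) (𝓝 (-2 / 3)) := by
  have hupper : Tendsto (fun u => -2 / 3 * (u / sinh u) ^ 2) (𝓝[≠] 0) (𝓝 (-2 / 3)) := by
    simpa using (tendsto_div_sinh_nhdsNE_zero.pow 2).const_mul (-2 / 3 : ℝ)
  exact tendsto_of_tendsto_of_tendsto_of_le_of_le' tendsto_const_nhds hupper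
    (eventually_mem_nhdsWithin.mono fun _ hu => (neg_two_thirds_lt_hyperbolicCoefficient hu).le)
    (eventually_mem_nhdsWithin.mono fun _ hu => hyperbolicCoefficient_le hu)

lemma tendsto_log_nhdsNE_one : Tendsto Real.log (𝓝[≠] 1) (𝓝[≠] 0) := by
  simpa using (Real.hasDerivAt_log one_ne_zero).tendsto_nhdsNE (inv_ne_zero one_ne_zero)

theorem coefficient_bound_two_thirds_general :
    (∀ p : ℝ, 0 < p → p ≠ 1 →
      -2 / 3 < (1 - p ^ 4 + 4 * p ^ 2 * Real.log p) / ((1 - p ^ 2) ^ 2 * Real.log p) ∧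
      (1 - p ^ 4 + 4 * p ^ 2 * Real.log p) / ((1 - p ^ 2) ^ 2 * Real.log p) < 0) ∧
    Tendsto
      (fun p : ℝ => (1 - p ^ 4 + 4 * p ^ 2 * Real.log p) / ((1 - p ^ 2) ^ 2 * Real.log p))
      (𝓝[≠] 1) (𝓝 (-2 / 3)) := by
  constructor
  · intro p hp hp1
    have hlog : Real.log p ≠ 0 := Real.log_ne_zero_of_pos_of_ne_one hp hp1
    rw [← hyperbolicCoefficient_log hp]
    exact ⟨neg_two_thirds_lt_hyperbolicCoefficient hlog, hyperbolicCoefficient_neg hlog⟩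
  · refine (tendsto_hyperbolicCoefficient_nhdsNE_zero.comp tendsto_log_nhdsNE_one).congr' ?_
    filter_upwards [nhdsWithin_le_nhds (Ioi_mem_nhds one_pos)] with p hp
    exact hyperbolicCoefficient_log hp

/-- For every `p ∈ (0,1)`,
`−2/3 ≤ (1 − p⁴ + 4p² ln p) / ((1 − p²)² ln p) < 0`, and the expression tends to `−2/3`
as `p → 1⁻`. -/
theorem coefficient_bound_two_thirds :
    (∀ p ∈ Set.Ioo (0 : ℝ) 1,
      -2 / 3 ≤ (1 - p ^ 4 + 4 * p ^ 2 * Real.log p) / ((1 - p ^ 2) ^ 2 * Real.log p) ∧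
      (1 - p ^ 4 + 4 * p ^ 2 * Real.log p) / ((1 - p ^ 2) ^ 2 * Real.log p) < 0) ∧
    Filter.Tendsto
      (fun p : ℝ => (1 - p ^ 4 + 4 * p ^ 2 * Real.log p) / ((1 - p ^ 2) ^ 2 * Real.log p))
      (nhdsWithin 1 (Set.Iio 1)) (nhds (-2 / 3)) :=
  ⟨fun p hp => (coefficient_bound_two_thirds_general.1 p hp.1 hp.2.ne).imp_left le_of_lt,
    coefficient_bound_two_thirds_general.2.mono_left (nhdsLT_le_nhdsNE 1)⟩
end

section
/- Let L > 0, R > 0, δ > 0 with R + δ < L, and set ρ = L − R − δ. Define d(θ) = L − ρ cos θ − √(R² − ρ² sin² θ). For every θ with ρ² sin² θ ≤ (3/4) R², the derivative of d satisfies (d′(θ))² ≤ 8 L² d(θ) / R. -/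
/-!
Write `s = √(R² − ρ² sin² θ)`. The derivative of `d` is `ρ sin θ (s + ρ cos θ) / s`, which is at
most `L |ρ sin θ| / s` in absolute value because `s + |ρ| ≤ R + |ρ| ≤ L`. Squaring leaves the factor
`ρ² sin² θ = R² − s² = 2 R (R − s) − (R − s)²`, so it is controlled by `R − s`, and `R − s ≤ d`.
-/

open Real

theorem le_two_mul_mul_sub_sqrt_sq_sub {R x : ℝ} (hx : x ≤ R ^ 2) :
    x ≤ 2 * R * (R - √(R ^ 2 - x)) := by
  have hsq : √(R ^ 2 - x) ^ 2 = R ^ 2 - x := sq_sqrt (sub_nonneg.mpr hx)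
  linarith [sq_nonneg (R - √(R ^ 2 - x))]

theorem abs_mul_cos_le (ρ θ : ℝ) : |ρ * cos θ| ≤ |ρ| := by
  rw [abs_mul]
  exact mul_le_of_le_one_right (abs_nonneg ρ) (abs_cos_le_one θ)

/-- The thickness at angle `θ` of the layer between the circle of radius `L` centered at the origin
and a disk of radius `R` whose center lies at signed distance `ρ` from the origin. Where the
radicand is negative, the square root is `0`, and the value has no geometric meaning. -/
noncomputable def boundaryLayerThickness (L R ρ θ : ℝ) : ℝ :=
  L - ρ * cos θ - √(R ^ 2 - ρ ^ 2 * sin θ ^ 2)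

namespace boundaryLayerThickness

variable {L R ρ θ : ℝ}

theorem sub_sqrt_le (hL : R + |ρ| ≤ L) (θ : ℝ) :
    R - √(R ^ 2 - ρ ^ 2 * sin θ ^ 2) ≤ boundaryLayerThickness L R ρ θ := by
  unfold boundaryLayerThickness
  linarith [(le_abs_self _).trans (abs_mul_cos_le ρ θ)]

theorem hasDerivAt (L : ℝ) (h : R ^ 2 - ρ ^ 2 * sin θ ^ 2 ≠ 0) :
    HasDerivAt (boundaryLayerThickness L R ρ)
      (ρ * sin θ * (1 + ρ * cos θ / √(R ^ 2 - ρ ^ 2 * sin θ ^ 2))) θ := by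
  have hsqrt := ((((hasDerivAt_sin θ).fun_pow 2).const_mul (ρ ^ 2)).const_sub (R ^ 2)).sqrt h
  refine ((((hasDerivAt_cos θ).const_mul ρ).const_sub L).fun_sub hsqrt).congr_deriv ?_
  ring

theorem abs_deriv_le (hR : 0 ≤ R) (hL : R + |ρ| ≤ L) (h : ρ ^ 2 * sin θ ^ 2 < R ^ 2) :
    |deriv (boundaryLayerThickness L R ρ) θ| ≤
      |ρ * sin θ| * (L / √(R ^ 2 - ρ ^ 2 * sin θ ^ 2)) := by
  have hrad : 0 < R ^ 2 - ρ ^ 2 * sin θ ^ 2 := sub_pos.mpr h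
  rw [(hasDerivAt L hrad.ne').deriv, abs_mul]
  set s := √(R ^ 2 - ρ ^ 2 * sin θ ^ 2)
  have hs : 0 < s := sqrt_pos.mpr hrad
  have hsR : s ≤ R := sqrt_le_iff.mpr ⟨hR, sub_le_self _ (by positivity)⟩
  gcongr
  calc |1 + ρ * cos θ / s| = |s + ρ * cos θ| / s := by
        rw [one_add_div hs.ne', abs_div, abs_of_pos hs]
    _ ≤ (|s| + |ρ * cos θ|) / s := by gcongr; exact abs_add_le _ _
    _ ≤ L / s := by
        gcongr
        linarith [abs_of_pos hs, abs_mul_cos_le ρ θ]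

end boundaryLayerThickness

theorem boundary_layer_thickness_deriv_sq_bound_general {L R ρ θ c : ℝ} (hR : 0 < R)
    (hL : R + |ρ| ≤ L) (hc : 0 < c) (hθ : ρ ^ 2 * sin θ ^ 2 ≤ (1 - c) * R ^ 2) :
    deriv (boundaryLayerThickness L R ρ) θ ^ 2 ≤
      2 * L ^ 2 * boundaryLayerThickness L R ρ θ / (c * R) := by
  have hcR : 0 < c * R ^ 2 := by positivity
  have hrad : c * R ^ 2 ≤ R ^ 2 - ρ ^ 2 * sin θ ^ 2 := by linarith
  have hsin : ρ ^ 2 * sin θ ^ 2 < R ^ 2 := by linarith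
  have hd : ρ ^ 2 * sin θ ^ 2 ≤ 2 * R * boundaryLayerThickness L R ρ θ :=
    (le_two_mul_mul_sub_sqrt_sq_sub hsin.le).trans <| by
      gcongr
      exact boundaryLayerThickness.sub_sqrt_le hL θ
  have hd_nonneg : 0 ≤ 2 * R * boundaryLayerThickness L R ρ θ := hd.trans' (by positivity)
  calc deriv (boundaryLayerThickness L R ρ) θ ^ 2
      = |deriv (boundaryLayerThickness L R ρ) θ| ^ 2 := (sq_abs _).symm
    _ ≤ (|ρ * sin θ| * (L / √(R ^ 2 - ρ ^ 2 * sin θ ^ 2))) ^ 2 := by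
        gcongr
        exact boundaryLayerThickness.abs_deriv_le hR.le hL hsin
    _ = ρ ^ 2 * sin θ ^ 2 * (L ^ 2 / (R ^ 2 - ρ ^ 2 * sin θ ^ 2)) := by
        rw [mul_pow, sq_abs, mul_pow, div_pow, sq_sqrt (sub_nonneg.mpr hsin.le)]
    _ ≤ 2 * R * boundaryLayerThickness L R ρ θ * (L ^ 2 / (c * R ^ 2)) := by
        gcongr
    _ = 2 * L ^ 2 * boundaryLayerThickness L R ρ θ / (c * R) := by field_simp

/-- For the boundary-layer thickness
`d(θ) = L − ρ cos θ − √(R² − ρ² sin² θ)` with `ρ = L − R − δ`, at every `θ` with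
`ρ² sin² θ ≤ (3/4) R²` the derivative of `d` satisfies `(d′(θ))² ≤ 8 L² d(θ)/R`. -/
theorem boundary_layer_thickness_deriv_sq_bound
    (L R δ : ℝ) (hL : 0 < L) (hR : 0 < R) (hδ : 0 < δ) (hsum : R + δ < L)
    (ρ : ℝ) (hρ : ρ = L - R - δ)
    (d : ℝ → ℝ)
    (hd : ∀ t : ℝ, d t = L - ρ * Real.cos t - Real.sqrt (R ^ 2 - ρ ^ 2 * Real.sin t ^ 2))
    (θ : ℝ) (hθ : ρ ^ 2 * Real.sin θ ^ 2 ≤ 3 / 4 * R ^ 2) :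
    (deriv d θ) ^ 2 ≤ 8 * L ^ 2 * d θ / R := by
  obtain rfl : d = boundaryLayerThickness L R ρ := funext hd
  have hcontained : R + |ρ| ≤ L := by rw [abs_of_pos (by linarith)]; linarith
  refine (boundary_layer_thickness_deriv_sq_bound_general (c := 1 / 4) hR hcontained
    (by norm_num) (by linarith)).trans_eq ?_
  ring
end
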